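/- Assume c : 𝒳 → ℝ is continuous and all marginals μ_{t,i} are supported in [−M, M] for some M > 0. Fix a feed-forward neural network architecture with at least one hidden layer whose activation function is continuous, nondecreasing, bounded and nonconstant, and let D̄^m(μ̌) be the infimum of ∫ h dμ₀ (for a fixed μ₀ ∈ ℳ(μ̌)) over all hedging functions h built from networks of hidden dimension m that satisfy h ≥ c on [−M,M]^{T×d}. Then D̄^m(μ̌) → D̄(μ̌) as m → ∞, where D̄(μ̌) is the corresponding infimum over all dual hedging functions with φ_{t,i} ∈ L¹(μ_{t,i}) and h_{t,i} measurable. -/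

import Mathlib

open MeasureTheory Filter

namespace MMOT

/-- Path space `𝒳 = (ℝ^d)^T`. -/
abbrev Path (T d : ℕ) := Fin T → Fin d → ℝ

/-- σ-algebra generated by the coordinates `X_0, …, X_t` (0-indexed). -/
noncomputable def pastSigma (T d : ℕ) (t : ℕ) : MeasurableSpace (Path T d) :=
  ⨆ s : Fin T, ⨆ _ : (s : ℕ) ≤ t, MeasurableSpace.comap (fun x => x s) inferInstance

def HasMarginals {T d : ℕ} (π : Measure (Path T d)) (μ : Fin T → Fin d → Measure ℝ) : Prop :=
  ∀ t i, π.map (fun x => x t i) = μ t i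

/-- `E_π[X_{t+1,i} | X_0,…,X_t]`. -/
noncomputable def condNext {T d : ℕ} (π : Measure (Path T d)) (t : ℕ) (ht : t + 1 < T)
    (i : Fin d) : Path T d → ℝ :=
  π[fun x => x ⟨t + 1, ht⟩ i | pastSigma T d t]

def IsMartingaleMeasure {T d : ℕ} (π : Measure (Path T d)) : Prop :=
  ∀ (t : ℕ) (ht : t + 1 < T) (i : Fin d),
    condNext π t ht i =ᵐ[π] fun x => x ⟨t, Nat.lt_of_succ_lt ht⟩ i

/-- The set `ℳ(μ̌)` of calibrated martingale measures. -/
def MartSet {T d : ℕ} (μ : Fin T → Fin d → Measure ℝ) : Set (Measure (Path T d)) :=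
  {π | IsProbabilityMeasure π ∧ HasMarginals π μ ∧ IsMartingaleMeasure π}

/-- Combined payoff of static positions `φ` and dynamic strategy `h`. -/
noncomputable def hedgeFn {T d : ℕ} (φ : Fin T → Fin d → ℝ → ℝ)
    (h : ∀ t : ℕ, t + 1 < T → Fin d → Path T d → ℝ) (x : Path T d) : ℝ :=
  (∑ t, ∑ i, φ t i (x t i)) +
    ∑ t : Fin T, ∑ i,
      if ht : (t : ℕ) + 1 < T then h t ht i x * (x ⟨(t : ℕ) + 1, ht⟩ i - x t i) else 0

/-- The cube `[-M, M]^{T×d}`. -/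
def cube (T d : ℕ) (M : ℝ) : Set (Path T d) :=
  {x | ∀ t i, x t i ∈ Set.Icc (-M) M}

noncomputable def hiddenSeq (ψ : ℝ → ℝ) {m : ℕ} (W : ℕ → Fin m → Fin m → ℝ)
    (b : ℕ → Fin m → ℝ) (v : Fin m → ℝ) : ℕ → Fin m → ℝ
  | 0 => v
  | j + 1 => fun i => ψ ((∑ i', W j i i' * hiddenSeq ψ W b v j i') + b j i)

/-- `f` is a feed-forward neural network `ℝ^k → ℝ` with `l` layers, hidden dimension `m`
and activation `ψ`: `f = A_l ∘ ψ ∘ A_{l-1} ∘ ⋯ ∘ ψ ∘ A_0` for affine maps `A_0, …, A_l`. -/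
def IsNeuralNet (ψ : ℝ → ℝ) (l k m : ℕ) (f : (Fin k → ℝ) → ℝ) : Prop :=
  ∃ (W0 : Fin m → Fin k → ℝ) (b0 : Fin m → ℝ) (W : ℕ → Fin m → Fin m → ℝ)
    (b : ℕ → Fin m → ℝ) (Wl : Fin m → ℝ) (bl : ℝ),
    ∀ x, f x = (∑ j, Wl j *
      hiddenSeq ψ W b (fun i => ψ ((∑ i', W0 i i' * x i') + b0 i)) (l - 1) j) + bl

/-- The first `t+1` coordinates of a path, flattened into a vector in `ℝ^{(t+1)d}`. -/
def restrFlatten (T d : ℕ) (t : ℕ) (ht : t + 1 < T) (x : Path T d) :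
    Fin ((t + 1) * d) → ℝ :=
  fun j => x (Fin.castLE ht.le (finProdFinEquiv.symm j).1) (finProdFinEquiv.symm j).2

/-- The statics `φ_{t,i}` and dynamics `h_{t,i}` belong to the neural-network class
`𝔑_{l,1,m}` resp. `𝔑_{l,d·t,m}`. -/
def NNHedge (ψ : ℝ → ℝ) (l m : ℕ) {T d : ℕ} (φ : Fin T → Fin d → ℝ → ℝ)
    (h : ∀ t : ℕ, t + 1 < T → Fin d → Path T d → ℝ) : Prop :=
  (∀ t i, ∃ F, IsNeuralNet ψ l 1 m F ∧ ∀ y, φ t i y = F fun _ => y) ∧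
  (∀ (t : ℕ) (ht : t + 1 < T) (i : Fin d), ∃ F, IsNeuralNet ψ l ((t + 1) * d) m F ∧
    ∀ x, h t ht i x = F (restrFlatten T d t ht x))

/-- The values `∫ h dμ₀` over all superhedges (on the cube) from the full dual class `𝓗`. -/
def dualCubeVals {T d : ℕ} (μ : Fin T → Fin d → Measure ℝ) (μ0 : Measure (Path T d))
    (c : Path T d → ℝ) (M : ℝ) : Set ℝ :=
  {r | ∃ (φ : Fin T → Fin d → ℝ → ℝ) (h : ∀ t : ℕ, t + 1 < T → Fin d → Path T d → ℝ),
    (∀ t i, Integrable (φ t i) (μ t i)) ∧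
    (∀ (t : ℕ) (ht : t + 1 < T) (i : Fin d), Measurable[pastSigma T d t] (h t ht i)) ∧
    (∀ x ∈ cube T d M, c x ≤ hedgeFn φ h x) ∧
    r = ∫ x, hedgeFn φ h x ∂μ0}

/-- The values `∫ h dμ₀` over all superhedges (on the cube) from the neural-network
class `𝓗^m`. -/
def dualCubeNNVals (ψ : ℝ → ℝ) (l m : ℕ) {T d : ℕ} (μ0 : Measure (Path T d))
    (c : Path T d → ℝ) (M : ℝ) : Set ℝ :=
  {r | ∃ (φ : Fin T → Fin d → ℝ → ℝ) (h : ∀ t : ℕ, t + 1 < T → Fin d → Path T d → ℝ),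
    NNHedge ψ l m φ h ∧
    (∀ x ∈ cube T d M, c x ≤ hedgeFn φ h x) ∧
    r = ∫ x, hedgeFn φ h x ∂μ0}


section
section Nets
variable {ψ : ℝ → ℝ} {l k : ℕ}

theorem isNN_const (ψ : ℝ → ℝ) (l k m : ℕ) (a : ℝ) : IsNeuralNet ψ l k m (fun _ => a) :=
  ⟨0, 0, 0, 0, 0, a, by intro x; simp⟩

theorem isNN_smul {m : ℕ} {f : (Fin k → ℝ) → ℝ} (hf : IsNeuralNet ψ l k m f) (a : ℝ) :
    IsNeuralNet ψ l k m (fun x => a * f x) := by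
  obtain ⟨W0, b0, W, b, Wl, bl, h⟩ := hf
  refine ⟨W0, b0, W, b, fun j => a * Wl j, a * bl, fun x => ?_⟩
  show a * f x = _
  rw [h x, mul_add, Finset.mul_sum]
  simp only [mul_assoc]

theorem hiddenSeq_append {m1 m2 : ℕ} (W1 : ℕ → Fin m1 → Fin m1 → ℝ) (b1 : ℕ → Fin m1 → ℝ)
    (v1 : Fin m1 → ℝ) (W2 : ℕ → Fin m2 → Fin m2 → ℝ) (b2 : ℕ → Fin m2 → ℝ)
    (v2 : Fin m2 → ℝ) (n : ℕ) :
    hiddenSeq ψ (fun j => Fin.append (fun i => Fin.append (W1 j i) 0)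
        (fun i => Fin.append 0 (W2 j i)))
      (fun j => Fin.append (b1 j) (b2 j)) (Fin.append v1 v2) n
    = Fin.append (hiddenSeq ψ W1 b1 v1 n) (hiddenSeq ψ W2 b2 v2 n) := by
  induction n with
  | zero => rfl
  | succ n ih =>
    funext i
    refine Fin.addCases (fun i => ?_) (fun i => ?_) i
    · simp [hiddenSeq, ih, Fin.sum_univ_add]
    · simp [hiddenSeq, ih, Fin.sum_univ_add]

theorem isNN_add {m1 m2 : ℕ} {f g : (Fin k → ℝ) → ℝ} (hf : IsNeuralNet ψ l k m1 f)
    (hg : IsNeuralNet ψ l k m2 g) : IsNeuralNet ψ l k (m1 + m2) (fun x => f x + g x) := by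
  obtain ⟨W0, b0, W, b, Wl, bl, h⟩ := hf
  obtain ⟨W0', b0', W', b', Wl', bl', h'⟩ := hg
  refine ⟨Fin.append W0 W0', Fin.append b0 b0',
    (fun j => Fin.append (fun i => Fin.append (W j i) 0) (fun i => Fin.append 0 (W' j i))),
    (fun j => Fin.append (b j) (b' j)), Fin.append Wl Wl', bl + bl', fun x => ?_⟩
  · show f x + g x = _
    have : (fun i => ψ ((∑ i', Fin.append W0 W0' i i' * x i') + Fin.append b0 b0' i))
      = Fin.append (fun i => ψ ((∑ i', W0 i i' * x i') + b0 i))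
        (fun i => ψ ((∑ i', W0' i i' * x i') + b0' i)) := by
      funext i
      refine Fin.addCases (fun i => ?_) (fun i => ?_) i <;> simp
    rw [this, hiddenSeq_append W b _ W' b' _, h x, h' x, Fin.sum_univ_add]
    simp
    ring

theorem isNN_mono {m1 m2 : ℕ} (hm : m1 ≤ m2) {f : (Fin k → ℝ) → ℝ}
    (hf : IsNeuralNet ψ l k m1 f) : IsNeuralNet ψ l k m2 f := by
  obtain ⟨n, rfl⟩ := Nat.exists_eq_add_of_le hm
  simpa using isNN_add hf (isNN_const ψ l k n 0)

theorem isNN_ridge (ψ : ℝ → ℝ) (w : Fin k → ℝ) (b : ℝ) :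
    IsNeuralNet ψ 1 k 1 (fun x => ψ ((∑ i, w i * x i) + b)) :=
  ⟨fun _ => w, fun _ => b, 0, 0, 1, 0, by intro x; simp [hiddenSeq]⟩

theorem hiddenSeq_congr {m : ℕ} {W W' : ℕ → Fin m → Fin m → ℝ} {b b' : ℕ → Fin m → ℝ}
    (v : Fin m → ℝ) (n : ℕ) (hW : ∀ j < n, W j = W' j) (hb : ∀ j < n, b j = b' j) :
    hiddenSeq ψ W b v n = hiddenSeq ψ W' b' v n := by
  induction n with
  | zero => rfl
  | succ n ih =>
    have := ih (fun j hj => hW j (by omega)) (fun j hj => hb j (by omega))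
    funext i
    simp only [hiddenSeq, this, hW n (by omega), hb n (by omega)]

theorem isNN_comp (hl : 1 ≤ l) {m : ℕ} {g : (Fin k → ℝ) → ℝ} (hg : IsNeuralNet ψ l k m g) :
    IsNeuralNet ψ (l + 1) k m (fun x => ψ (g x)) := by
  obtain ⟨W0, b0, W, b, Wl, bl, h⟩ := hg
  rcases m with _ | m
  · have : (fun x => ψ (g x)) = fun _ => ψ bl := by
      funext x; rw [h x]; simp
    rw [this]; exact isNN_const _ _ _ _ _
  · refine ⟨W0, b0, fun j => if j = l - 1 then fun _ => Wl else W j,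
      fun j => if j = l - 1 then fun _ => bl else b j, Pi.single 0 1, 0, fun x => ?_⟩
    obtain ⟨n, rfl⟩ : ∃ n, l = n + 1 := ⟨l - 1, by omega⟩
    simp only [Nat.add_sub_cancel] at h ⊢
    rw [h x]
    simp only [Pi.single_apply, ite_mul, one_mul, zero_mul, Finset.sum_ite_eq', Finset.mem_univ,
      if_true, add_zero, hiddenSeq]
    congr 1
    congr 1
    refine Finset.sum_congr rfl fun i _ => ?_
    congr 1
    refine congrFun (hiddenSeq_congr _ _ ?_ ?_) i
    · intro j hj; rw [if_neg (by omega)]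
    · intro j hj; rw [if_neg (by omega)]

theorem isNN_continuous (hψ : Continuous ψ) {m : ℕ} {g : (Fin k → ℝ) → ℝ}
    (hg : IsNeuralNet ψ l k m g) : Continuous g := by
  obtain ⟨W0, b0, W, b, Wl, bl, h⟩ := hg
  have hs : ∀ n i, Continuous fun x : Fin k → ℝ =>
      hiddenSeq ψ W b (fun i => ψ ((∑ i', W0 i i' * x i') + b0 i)) n i := by
    intro n
    induction n with
    | zero => intro i; simp only [hiddenSeq]; fun_prop
    | succ n ih => intro i; simp only [hiddenSeq]; fun_prop
  have : g = fun x => _ := funext h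
  rw [this]
  have := hs (l - 1)
  fun_prop

end Nets
end


section
section OneDim

/-- one-dimensional superpositions of the activation -/
def Span1 (ψ : ℝ → ℝ) (g : ℝ → ℝ) : Prop :=
  ∃ (n : ℕ) (a0 : ℝ) (c a b : ℕ → ℝ), ∀ y, g y = a0 + ∑ j ∈ Finset.range n, c j * ψ (a j * y + b j)

theorem sigm_exists {ψ : ℝ → ℝ} (hψmono : Monotone ψ)
    (hψbdd : ∃ C, ∀ x, |ψ x| ≤ C) (hψnonconst : ∃ x y, ψ x ≠ ψ y) :
    ∃ (α β : ℝ), (∀ x, 0 ≤ α * ψ x + β ∧ α * ψ x + β ≤ 1) ∧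
      ∀ ε > 0, ∃ A, ∀ x, (A ≤ x → 1 - ε ≤ α * ψ x + β) ∧ (x ≤ -A → α * ψ x + β ≤ ε) := by
  obtain ⟨C, hC⟩ := hψbdd
  have ba : BddAbove (Set.range ψ) := ⟨C, by rintro _ ⟨x, rfl⟩; exact (abs_le.1 (hC x)).2⟩
  have bb : BddBelow (Set.range ψ) := ⟨-C, by rintro _ ⟨x, rfl⟩; exact (abs_le.1 (hC x)).1⟩
  have t1 := tendsto_atTop_ciSup hψmono ba
  have t2 := tendsto_atBot_ciInf hψmono bb
  set p := ⨆ i, ψ i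
  set q := ⨅ i, ψ i
  have hp : ∀ x, ψ x ≤ p := fun x => le_ciSup ba x
  have hq : ∀ x, q ≤ ψ x := fun x => ciInf_le bb x
  have hpq : q < p := by
    obtain ⟨x, y, hxy⟩ := hψnonconst
    by_contra hcon
    have := hp x; have := hp y; have := hq x; have := hq y
    exact hxy (by linarith)
  have hd : 0 < p - q := by linarith
  have key : ∀ x, (p - q)⁻¹ * ψ x + -(q / (p - q)) = (ψ x - q) / (p - q) := by
    intro x; field_simp; ring
  refine ⟨(p - q)⁻¹, -(q / (p - q)), fun x => ?_, fun ε hε => ?_⟩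
  · rw [key]
    have := hp x; have := hq x
    exact ⟨div_nonneg (by linarith) hd.le, (div_le_one hd).2 (by linarith)⟩
  · have e1 := t1.eventually (lt_mem_nhds (show p - ε * (p - q) < p by nlinarith))
    have e2 := t2.eventually (gt_mem_nhds (show q < q + ε * (p - q) by nlinarith))
    obtain ⟨A1, h1⟩ := eventually_atTop.1 e1
    obtain ⟨A2, h2⟩ := eventually_atBot.1 e2
    refine ⟨max A1 (-A2), fun x => ⟨fun hx => ?_, fun hx => ?_⟩⟩
    · rw [key, le_div_iff₀ hd]
      have := h1 x (le_trans (le_max_left _ _) hx)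
      nlinarith
    · rw [key, div_le_iff₀ hd]
      have := h2 x (by have := le_max_right A1 (-A2); linarith)
      nlinarith

theorem oneDim_approx {ψ : ℝ → ℝ} (hψmono : Monotone ψ)
    (hψbdd : ∃ C, ∀ x, |ψ x| ≤ C) (hψnonconst : ∃ x y, ψ x ≠ ψ y)
    (f : ℝ → ℝ) (hf : Continuous f) (R : ℝ) (hR : 0 < R) (ε : ℝ) (hε : 0 < ε) :
    ∃ g, Span1 ψ g ∧ ∀ y ∈ Set.Icc (-R) R, |g y - f y| ≤ ε := by
  obtain ⟨α, β, hσ, hlim⟩ := sigm_exists hψmono hψbdd hψnonconst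
  have huc : UniformContinuousOn f (Set.Icc (-R) R) :=
    isCompact_Icc.uniformContinuousOn_of_continuous hf.continuousOn
  obtain ⟨η, hη, hu⟩ := Metric.uniformContinuousOn_iff.1 huc (ε / 3) (by positivity)
  obtain ⟨N, hN⟩ := exists_nat_gt (2 * R / η)
  have hN0 : (0 : ℝ) < N := lt_trans (by positivity) hN
  set s := 2 * R / N with hs
  have hs0 : 0 < s := by positivity
  have hsη : s < η := by
    rw [hs, div_lt_iff₀ hN0]; rw [div_lt_iff₀ hη] at hN; linarith
  obtain ⟨A0, hA0⟩ := hlim (1 / N) (by positivity)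
  set A := max A0 0
  have hA : ∀ x, (A ≤ x → 1 - 1 / N ≤ α * ψ x + β) ∧ (x ≤ -A → α * ψ x + β ≤ 1 / N) := by
    intro x
    have := le_max_left A0 0
    exact ⟨fun h => (hA0 x).1 (by linarith), fun h => (hA0 x).2 (by linarith)⟩
  have hAn : 0 ≤ A := le_max_right _ _
  -- grid
  let X : ℕ → ℝ := fun j => -R + j * s
  have hXs : ∀ j, X (j + 1) = X j + s := fun j => by simp only [X]; push_cast; ring
  have hX0 : X 0 = -R := by simp [X]
  have hXN : X N = R := by simp only [X, hs]; field_simp; ring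
  have hXmono : ∀ i j, i ≤ j → X i ≤ X j := by
    intro i j hij
    have : (i : ℝ) ≤ j := by exact_mod_cast hij
    simp only [X]; nlinarith
  have hXmem : ∀ j ≤ N, X j ∈ Set.Icc (-R) R := fun j hj =>
    ⟨hX0 ▸ hXmono 0 j (Nat.zero_le _), hXN ▸ hXmono j N hj⟩
  let B : ℝ := 2 * A / s
  let D : ℕ → ℝ := fun j => f (X (j + 1)) - f (X j)
  let σ : ℕ → ℝ → ℝ := fun j y => α * ψ (B * y + (-(B * (X j + s / 2)))) + β
  refine ⟨fun y => f (X 0) + ∑ j ∈ Finset.range N, D j * σ j y, ?_, fun y hy => ?_⟩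
  · refine ⟨N, f (X 0) + ∑ j ∈ Finset.range N, D j * β, fun j => D j * α, fun _ => B,
      fun j => -(B * (X j + s / 2)), fun y => ?_⟩
    show f (X 0) + ∑ j ∈ Finset.range N, D j * σ j y = _
    rw [add_assoc, ← Finset.sum_add_distrib]
    congr 1
    refine Finset.sum_congr rfl fun j _ => ?_
    simp only [σ]; ring
  · let F : ℕ → ℝ := fun j => f (min y (X j))
    have hF0 : F 0 = f (X 0) := by simp only [F]; rw [min_eq_right (by rw [hX0]; exact hy.1)]
    have hFN : F N = f y := by simp only [F]; rw [min_eq_left (by rw [hXN]; exact hy.2)]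
    have htel : ∑ j ∈ Finset.range N, (F (j + 1) - F j) = f y - f (X 0) := by
      rw [Finset.sum_range_sub, hF0, hFN]
    have hdist : ∀ u ∈ Set.Icc (-R) R, ∀ v ∈ Set.Icc (-R) R, |u - v| ≤ s →
        |f u - f v| ≤ ε / 3 := by
      intro u hu' v hv' huv
      exact (hu u hu' v hv' (by rw [Real.dist_eq]; linarith)).le
    have hDb : ∀ j < N, |D j| ≤ ε / 3 := by
      intro j hj
      apply hdist _ (hXmem _ (by omega)) _ (hXmem _ (by omega))
      rw [hXs, add_sub_cancel_left, abs_of_pos hs0]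
    have herr : ∀ j < N, |D j * σ j y - (F (j + 1) - F j)| ≤
        ε / 3 * (1 / N) + (if X j < y ∧ y < X (j + 1) then 2 * (ε / 3) else 0) := by
      intro j hj
      have hσj := hσ (B * y + (-(B * (X j + s / 2))))
      have hBs : B * (s / 2) = A := by simp only [B]; field_simp
      have hB0 : 0 ≤ B := by positivity
      have hD := hDb j hj
      by_cases h1 : y ≤ X j
      · have h2 : y ≤ X (j + 1) := by rw [hXs]; linarith
        have : F (j + 1) - F j = 0 := by simp only [F]; rw [min_eq_left h1, min_eq_left h2]; ring
        rw [this, sub_zero, if_neg (by intro h; linarith [h.1]), add_zero, abs_mul]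
        have hle : σ j y ≤ 1 / N := (hA _).2 (by nlinarith)
        have : |σ j y| ≤ 1 / N := by rw [abs_of_nonneg hσj.1]; exact hle
        exact mul_le_mul hD this (abs_nonneg _) (by positivity)
      · push Not at h1
        by_cases h2 : X (j + 1) ≤ y
        · have : F (j + 1) - F j = D j := by
            simp only [F, D]; rw [min_eq_right h1.le, min_eq_right h2]
          rw [this, if_neg (by intro h; linarith [h.2]), add_zero]
          have hle : 1 - 1 / N ≤ σ j y := (hA _).1 (by rw [hXs] at h2; nlinarith)
          have h3 : |σ j y - 1| ≤ 1 / N := by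
            rw [abs_le]; exact ⟨by linarith, by have := hσj.2; simp only [σ]; linarith [hN0, one_div_pos.2 hN0]⟩
          have : D j * σ j y - D j = D j * (σ j y - 1) := by ring
          rw [this, abs_mul]
          exact mul_le_mul hD h3 (abs_nonneg _) (by positivity)
        · push Not at h2
          rw [if_pos ⟨h1, h2⟩]
          have e1 : |D j * σ j y| ≤ ε / 3 := by
            rw [abs_mul, abs_of_nonneg hσj.1]
            calc |D j| * _ ≤ |D j| * 1 := mul_le_mul_of_nonneg_left hσj.2 (abs_nonneg _)
              _ ≤ _ := by linarith
          have e2 : |F (j + 1) - F j| ≤ ε / 3 := by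
            simp only [F]; rw [min_eq_left h2.le, min_eq_right h1.le]
            apply hdist _ hy _ (hXmem _ (by omega))
            rw [abs_of_pos (by linarith)]; rw [hXs] at h2; linarith
          have : 0 ≤ ε / 3 * (1 / (N : ℝ)) := by positivity
          have := abs_sub (D j * σ j y) (F (j + 1) - F j)
          linarith
    have e0 : f (X 0) + ∑ j ∈ Finset.range N, D j * σ j y - f y
        = ∑ j ∈ Finset.range N, (D j * σ j y - (F (j + 1) - F j)) := by
      rw [Finset.sum_sub_distrib, htel]; ring
    show |f (X 0) + ∑ j ∈ Finset.range N, D j * σ j y - f y| ≤ ε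
    rw [e0]
    refine (Finset.abs_sum_le_sum_abs _ _).trans ?_
    refine (Finset.sum_le_sum fun j hj => herr j (Finset.mem_range.1 hj)).trans ?_
    rw [Finset.sum_add_distrib, Finset.sum_const, Finset.card_range, nsmul_eq_mul,
      ← Finset.sum_filter, Finset.sum_const, nsmul_eq_mul]
    have hcard : ((Finset.range N).filter fun j => X j < y ∧ y < X (j + 1)).card ≤ 1 := by
      rw [Finset.card_le_one]
      intro i hi j hj
      simp only [Finset.mem_filter] at hi hj
      by_contra hne
      rcases lt_or_gt_of_ne hne with h | h
      · have := hXmono (i + 1) j h; linarith [hi.2.2, hj.2.1]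
      · have := hXmono (j + 1) i h; linarith [hj.2.2, hi.2.1]
    have hcard' : (((Finset.range N).filter fun j => X j < y ∧ y < X (j + 1)).card : ℝ) ≤ 1 := by
      exact_mod_cast hcard
    have : (N : ℝ) * (ε / 3 * (1 / N)) = ε / 3 := by field_simp
    rw [this]
    nlinarith

end OneDim
end


section
section UAT

/-- uniform approximability on `K` by nets with `l` layers -/
def Appr (ψ : ℝ → ℝ) (l : ℕ) {k : ℕ} (K : Set (Fin k → ℝ)) (f : (Fin k → ℝ) → ℝ) : Prop :=
  ∀ ε > 0, ∃ m F, IsNeuralNet ψ l k m F ∧ ∀ x ∈ K, |F x - f x| ≤ ε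

theorem isNN_span1 {ψ : ℝ → ℝ} {l k : ℕ} {G : (Fin k → ℝ) → ℝ}
    (hG : ∀ a b : ℝ, ∃ m, IsNeuralNet ψ l k m (fun x => ψ (a * G x + b)))
    {g : ℝ → ℝ} (hg : Span1 ψ g) : ∃ m, IsNeuralNet ψ l k m (fun x => g (G x)) := by
  obtain ⟨n, a0, c, a, b, h⟩ := hg
  have : (fun x => g (G x)) =
      fun x => a0 + ∑ j ∈ Finset.range n, c j * ψ (a j * G x + b j) := by
    funext x; rw [h]
  rw [this]
  clear this h
  induction n with
  | zero => exact ⟨0, by simpa using isNN_const ψ l k 0 a0⟩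
  | succ n ih =>
    obtain ⟨m, hm⟩ := ih
    obtain ⟨m', hm'⟩ := hG (a n) (b n)
    refine ⟨m + m', ?_⟩
    have := isNN_add hm (isNN_smul hm' (c n))
    convert this using 2 with x
    rw [Finset.sum_range_succ]; ring

variable {ψ : ℝ → ℝ}

theorem appr_comp (hψmono : Monotone ψ)
    (hψbdd : ∃ C, ∀ x, |ψ x| ≤ C) (hψnonconst : ∃ x y, ψ x ≠ ψ y) {l k : ℕ}
    {K : Set (Fin k → ℝ)} (hK : IsCompact K) {G : (Fin k → ℝ) → ℝ} (hGc : Continuous G)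
    (hG : ∀ a b : ℝ, ∃ m, IsNeuralNet ψ l k m (fun x => ψ (a * G x + b)))
    {f : ℝ → ℝ} (hf : Continuous f) : Appr ψ l K (fun x => f (G x)) := by
  intro ε hε
  obtain ⟨R, hR⟩ := hK.exists_bound_of_continuousOn hGc.continuousOn
  obtain ⟨g, hg, hgf⟩ := oneDim_approx hψmono hψbdd hψnonconst f hf (max R 1)
    (lt_of_lt_of_le one_pos (le_max_right _ _)) ε hε
  obtain ⟨m, hm⟩ := isNN_span1 hG hg
  refine ⟨m, _, hm, fun x hx => hgf _ ?_⟩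
  have := (hR x hx).trans (le_max_left R 1)
  rw [Real.norm_eq_abs, abs_le] at this
  exact this

theorem appr_one (hψmono : Monotone ψ)
    (hψbdd : ∃ C, ∀ x, |ψ x| ≤ C) (hψnonconst : ∃ x y, ψ x ≠ ψ y) {k : ℕ}
    {K : Set (Fin k → ℝ)} (hK : IsCompact K) {f : (Fin k → ℝ) → ℝ} (hf : Continuous f) :
    Appr ψ 1 K f := by
  have : CompactSpace K := isCompact_iff_compactSpace.1 hK
  let E : Submodule ℝ C(K, ℝ) :=
    { carrier := {v | ∀ ε > 0, ∃ m F, IsNeuralNet ψ 1 k m F ∧ ∀ x : K, |F x - v x| ≤ ε}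
      zero_mem' := fun ε hε => ⟨0, _, isNN_const ψ 1 k 0 0, fun x => by simp [hε.le]⟩
      add_mem' := by
        intro u v hu hv ε hε
        obtain ⟨m, F, hF, h1⟩ := hu (ε / 2) (by positivity)
        obtain ⟨m', F', hF', h2⟩ := hv (ε / 2) (by positivity)
        refine ⟨_, _, isNN_add hF hF', fun x => ?_⟩
        have := h1 x; have := h2 x
        have e : F x + F' x - (u + v) x = (F x - u x) + (F' x - v x) := by
          simp only [ContinuousMap.add_apply]; ring
        rw [e]
        exact (abs_add_le _ _).trans (by linarith)
      smul_mem' := by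
        intro a v hv ε hε
        obtain ⟨m, F, hF, h1⟩ := hv (ε / (|a| + 1)) (by positivity)
        refine ⟨_, _, isNN_smul hF a, fun x => ?_⟩
        have e : a * F x - (a • v) x = a * (F x - v x) := by
          simp only [ContinuousMap.smul_apply, smul_eq_mul]; ring
        rw [e, abs_mul]
        have := h1 x
        rw [le_div_iff₀ (by positivity)] at this
        nlinarith [abs_nonneg (F x - v x)] }
  have hEcl : IsClosed (E : Set C(K, ℝ)) := by
    rw [← closure_subset_iff_isClosed]
    intro v hv ε hε
    obtain ⟨u, hu, huv⟩ := Metric.mem_closure_iff.1 hv (ε / 2) (by positivity)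
    obtain ⟨m, F, hF, h1⟩ := hu (ε / 2) (by positivity)
    refine ⟨m, F, hF, fun x => ?_⟩
    have h2 : |u x - v x| ≤ ε / 2 := by
      rw [dist_comm] at huv
      have := (ContinuousMap.dist_apply_le_dist (f := u) (g := v) x).trans huv.le
      rwa [Real.dist_eq] at this
    have := h1 x
    have e : F x - v x = (F x - u x) + (u x - v x) := by ring
    rw [e]
    exact (abs_add_le _ _).trans (by linarith)
  let ex : (Fin k → ℝ) → C(K, ℝ) := fun w =>
    ⟨fun x => Real.exp (∑ i, w i * (x : Fin k → ℝ) i),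
      Real.continuous_exp.comp (continuous_finsetSum _ fun i _ =>
        continuous_const.mul ((continuous_apply i).comp continuous_subtype_val))⟩
  have hex : ∀ w, ex w ∈ E := by
    intro w ε hε
    obtain ⟨m, F, hF, h⟩ := appr_comp (l := 1) hψmono hψbdd hψnonconst hK
      (G := fun x => ∑ i, w i * x i) (by fun_prop)
      (fun a b => ⟨1, by
        convert isNN_ridge ψ (fun i => a * w i) b using 5
        rw [Finset.mul_sum]; simp only [mul_assoc]⟩) Real.continuous_exp ε hε
    exact ⟨m, F, hF, fun x => h x x.2⟩
  let S : Submonoid C(K, ℝ) :=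
    { carrier := Set.range ex
      one_mem' := ⟨0, by ext x; simp [ex]⟩
      mul_mem' := by
        rintro _ _ ⟨w, rfl⟩ ⟨w', rfl⟩
        exact ⟨w + w', by ext x; simp [ex, add_mul, Finset.sum_add_distrib, Real.exp_add]⟩ }
  have hle : (Subalgebra.toSubmodule (Algebra.adjoin ℝ (S : Set C(K, ℝ)))) ≤ E := by
    rw [Algebra.adjoin_eq_span, Submonoid.closure_eq, Submodule.span_le]
    rintro _ ⟨w, rfl⟩
    exact hex w
  have hsep : (Algebra.adjoin ℝ (S : Set C(K, ℝ))).SeparatesPoints := by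
    intro x y hxy
    have : ∃ i, (x : Fin k → ℝ) i ≠ (y : Fin k → ℝ) i := by
      by_contra hcon; push Not at hcon
      exact hxy (Subtype.ext (funext hcon))
    obtain ⟨i, hi⟩ := this
    refine ⟨ex (Pi.single i 1), ⟨ex (Pi.single i 1), Algebra.subset_adjoin ⟨_, rfl⟩, rfl⟩, ?_⟩
    simpa [ex, Pi.single_apply] using hi
  have htop := ContinuousMap.subalgebra_topologicalClosure_eq_top_of_separatesPoints _ hsep
  let v : C(K, ℝ) := ⟨fun x => f x, by fun_prop⟩
  have hv : v ∈ E := by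
    have h1 : v ∈ (Algebra.adjoin ℝ (S : Set C(K, ℝ))).topologicalClosure := by
      rw [htop]; trivial
    have h2 : v ∈ closure ((Algebra.adjoin ℝ (S : Set C(K, ℝ))) : Set C(K, ℝ)) := h1
    exact closure_minimal (fun _ h => hle h) hEcl h2
  intro ε hε
  obtain ⟨m, F, hF, h⟩ := hv ε hε
  exact ⟨m, F, hF, fun x hx => h ⟨x, hx⟩⟩

theorem appr_all (hψcont : Continuous ψ) (hψmono : Monotone ψ)
    (hψbdd : ∃ C, ∀ x, |ψ x| ≤ C) (hψnonconst : ∃ x y, ψ x ≠ ψ y) {l : ℕ} (hl : 1 ≤ l) {k : ℕ}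
    {K : Set (Fin k → ℝ)} (hK : IsCompact K) {f : (Fin k → ℝ) → ℝ} (hf : Continuous f) :
    Appr ψ l K f := by
  induction l, hl using Nat.le_induction with
  | base => exact appr_one hψmono hψbdd hψnonconst hK hf
  | succ l hl ih =>
    intro ε hε
    obtain ⟨m, F, hF, h1⟩ := ih (ε / 2) (by positivity)
    obtain ⟨m', F', hF', h2⟩ := appr_comp (l := l + 1) hψmono hψbdd hψnonconst hK
      (isNN_continuous hψcont hF)
      (fun a b => ⟨m + 0, isNN_comp hl (isNN_add (isNN_smul hF a) (isNN_const ψ l k 0 b))⟩)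
      continuous_id (ε / 2) (by positivity)
    refine ⟨m', F', hF', fun x hx => ?_⟩
    have := h1 x hx; have := h2 x hx
    have e : F' x - f x = (F' x - id (F x)) + (F x - f x) := by simp
    rw [e]
    exact (abs_add_le _ _).trans (by linarith)

end UAT
end


section
section Duality
variable {K : Type*} [TopologicalSpace K] [CompactSpace K] [T2Space K] [MeasurableSpace K]
  [BorelSpace K]

theorem cm_integrable (ν : Measure K) [IsFiniteMeasure ν] (f : C(K, ℝ)) :
    Integrable (fun x => f x) ν :=
  f.continuous.integrable_of_hasCompactSupport (HasCompactSupport.of_compactSpace _)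

theorem riesz_exists (Λ : C(K, ℝ) →ₗ[ℝ] ℝ) (hpos : ∀ f, 0 ≤ f → 0 ≤ Λ f) :
    ∃ π : Measure K, IsFiniteMeasure π ∧ ∀ f : C(K, ℝ), ∫ x, f x ∂π = Λ f := by
  let L : CompactlySupportedContinuousMap K ℝ →ₗ[ℝ] ℝ :=
    { toFun := fun f => Λ f.toContinuousMap
      map_add' := fun f g => by rw [← map_add]; rfl
      map_smul' := fun a f => by rw [RingHom.id_apply, ← map_smul]; rfl }
  let P : CompactlySupportedContinuousMap K ℝ →ₚ[ℝ] ℝ := PositiveLinearMap.mk₀ L (by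
    intro f hf; exact hpos _ hf)
  refine ⟨RealRMK.rieszMeasure P, ⟨isCompact_univ.measure_lt_top⟩, fun f => ?_⟩
  exact RealRMK.integral_rieszMeasure P (CompactlySupportedContinuousMap.continuousMapEquiv f)

theorem abstract_duality (V : Submodule ℝ C(K, ℝ)) (h1 : (1 : C(K, ℝ)) ∈ V)
    (ν : Measure K) [IsProbabilityMeasure ν] (c : C(K, ℝ)) :
    ∃ π : Measure K, IsProbabilityMeasure π ∧ (∀ v ∈ V, ∫ x, v x ∂π = ∫ x, v x ∂ν) ∧
      ∀ ε > 0, ∃ v ∈ V, (∀ x, c x ≤ v x) ∧ ∫ x, v x ∂ν ≤ ∫ x, c x ∂π + ε := by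
  let A : C(K, ℝ) → Set ℝ := fun f => {r | ∃ v ∈ V, (∀ x, f x ≤ v x) ∧ ∫ x, v x ∂ν = r}
  let D : C(K, ℝ) → ℝ := fun f => sInf (A f)
  have hne : ∀ f, (A f).Nonempty := fun f =>
    ⟨_, ‖f‖ • 1, V.smul_mem _ h1, fun x => by
      have := (le_abs_self _).trans (f.norm_coe_le_norm x)
      simpa using this, rfl⟩
  have hbd : ∀ f, BddBelow (A f) := fun f => ⟨∫ x, f x ∂ν, by
    rintro r ⟨v, hv, hfv, rfl⟩
    exact integral_mono (cm_integrable ν f) (cm_integrable ν v) hfv⟩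
  have hDle : ∀ f, ∀ v ∈ V, (∀ x, f x ≤ v x) → D f ≤ ∫ x, v x ∂ν := fun f v hv h =>
    csInf_le (hbd f) ⟨v, hv, h, rfl⟩
  have hDex : ∀ f, ∀ ε > 0, ∃ v ∈ V, (∀ x, f x ≤ v x) ∧ ∫ x, v x ∂ν < D f + ε := by
    intro f ε hε
    obtain ⟨r, ⟨v, hv, h, rfl⟩, hr⟩ := exists_lt_of_csInf_lt (hne f)
      (show sInf (A f) < D f + ε by simp only [D]; linarith)
    exact ⟨v, hv, h, hr⟩
  have hadd : ∀ f g, D (f + g) ≤ D f + D g := by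
    intro f g
    apply le_of_forall_pos_le_add
    intro ε hε
    obtain ⟨v, hv, h, hr⟩ := hDex f (ε / 2) (by positivity)
    obtain ⟨v', hv', h', hr'⟩ := hDex g (ε / 2) (by positivity)
    have := hDle (f + g) (v + v') (V.add_mem hv hv') (fun x => add_le_add (h x) (h' x))
    have e : ∫ x, (v + v') x ∂ν = ∫ x, v x ∂ν + ∫ x, v' x ∂ν :=
      integral_add (cm_integrable ν v) (cm_integrable ν v')
    linarith
  have hsle : ∀ a : ℝ, 0 < a → ∀ f, D (a • f) ≤ a * D f := by
    intro a ha f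
    apply le_of_forall_pos_le_add
    intro ε hε
    obtain ⟨v, hv, h, hr⟩ := hDex f (ε / a) (by positivity)
    have := hDle (a • f) (a • v) (V.smul_mem _ hv)
      (fun x => mul_le_mul_of_nonneg_left (h x) ha.le)
    have e : ∫ x, (a • v) x ∂ν = a * ∫ x, v x ∂ν := integral_const_mul a _
    have e2 : a * (D f + ε / a) = a * D f + ε := by field_simp
    have := mul_le_mul_of_nonneg_left hr.le ha.le
    linarith
  have hsmul : ∀ a : ℝ, 0 < a → ∀ f, D (a • f) = a * D f := by
    intro a ha f
    refine le_antisymm (hsle a ha f) ?_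
    have := hsle a⁻¹ (by positivity) (a • f)
    rw [smul_smul, inv_mul_cancel₀ ha.ne', one_smul] at this
    calc a * D f ≤ a * (a⁻¹ * D (a • f)) := mul_le_mul_of_nonneg_left this ha.le
      _ = _ := by field_simp
  have hD0 : D 0 = 0 := by
    have := hsmul 2 (by norm_num) 0
    rw [smul_zero] at this; linarith
  let p : C(K, ℝ) →ₗ.[ℝ] ℝ := LinearPMap.mkSpanSingleton' c (D c) (by
    intro a ha
    rcases smul_eq_zero.1 ha with h | h
    · simp [h]
    · simp [h, hD0])
  obtain ⟨Λ, hΛ, hΛD⟩ := exists_extension_of_le_sublinear p D hsmul hadd (by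
    rintro ⟨x, hx⟩
    obtain ⟨a, rfl⟩ := Submodule.mem_span_singleton.1 hx
    have : p ⟨a • c, hx⟩ = a * D c := LinearPMap.mkSpanSingleton'_apply _ _ _ _ _
    rw [this]
    rcases lt_trichotomy a 0 with h | h | h
    · have h2 := hsmul (-a) (by linarith) c
      have h3 := hadd (a • c) ((-a) • c)
      rw [← add_smul, add_neg_cancel, zero_smul, hD0] at h3
      simp only
      linarith
    · subst h; simp [hD0]
    · rw [hsmul a h])
  have hΛc : Λ c = D c := by
    have := hΛ ⟨c, Submodule.mem_span_singleton_self c⟩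
    rw [this]
    exact LinearPMap.mkSpanSingleton'_apply_self _ _ _ _
  have hΛV : ∀ v ∈ V, Λ v = ∫ x, v x ∂ν := by
    intro v hv
    apply le_antisymm
    · exact (hΛD v).trans (hDle v v hv fun _ => le_rfl)
    · have := (hΛD (-v)).trans (hDle (-v) (-v) (V.neg_mem hv) fun _ => le_rfl)
      have e : ∫ x, (-v) x ∂ν = - ∫ x, v x ∂ν := integral_neg _
      rw [map_neg, e] at this
      linarith
  have hpos : ∀ f, 0 ≤ f → 0 ≤ Λ f := by
    intro f hf
    have := (hΛD (-f)).trans (hDle (-f) 0 V.zero_mem fun x => by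
      have := hf x
      simpa using this)
    rw [map_neg] at this
    simp at this
    linarith
  obtain ⟨π, hπ, hint⟩ := riesz_exists Λ hpos
  refine ⟨π, ?_, fun v hv => by rw [hint, hΛV v hv], fun ε hε => ?_⟩
  · have h := hint 1
    rw [hΛV 1 h1] at h
    simp at h
    constructor
    rw [measureReal_def] at h
    exact (ENNReal.toReal_eq_one_iff _).1 h
  · obtain ⟨v, hv, h, hr⟩ := hDex c ε hε
    exact ⟨v, hv, h, by rw [hint, hΛc]; exact hr.le⟩

end Duality
end


section
section MartTransform

theorem mart_transform {Ω : Type*} {m0 : MeasurableSpace Ω} (π : Measure Ω) [IsFiniteMeasure π]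
    (F : ℕ → MeasurableSpace Ω) (hF : ∀ n, F n ≤ m0) (hmono : ∀ n, F n ≤ F (n + 1))
    (Z : ℕ → Ω → ℝ) (hZ : ∀ n, Measurable[F (n + 1)] (Z n)) (A : ℕ → ℕ → Set Ω)
    (hA : ∀ n N, MeasurableSet[F n] (A n N)) (hAev : ∀ n x, ∀ᶠ N in atTop, x ∈ A n N)
    (hint : ∀ n N B, MeasurableSet[F n] B → B ⊆ A n N →
      IntegrableOn (Z n) B π ∧ ∫ x in B, Z n x ∂π = 0) (n : ℕ) :
    ∀ G : Ω → ℝ, Integrable G π → (∀ᵐ x ∂π, -G x ≤ ∑ t ∈ Finset.range n, Z t x) →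
      Integrable (fun x => ∑ t ∈ Finset.range n, Z t x) π ∧
        ∫ x, ∑ t ∈ Finset.range n, Z t x ∂π = 0 := by
  have hYm : ∀ n, Measurable[F n] (fun x => ∑ t ∈ Finset.range n, Z t x) := by
    intro n
    induction n with
    | zero => simp only [Finset.range_zero, Finset.sum_empty]; exact measurable_const
    | succ n ih =>
      simp only [Finset.sum_range_succ]
      exact (ih.mono (hmono n) le_rfl).add (hZ n)
  induction n with
  | zero => intro G _ _; simp
  | succ n ih =>
    intro G hG hGY
    set Y : Ω → ℝ := fun x => ∑ t ∈ Finset.range n, Z t x with hYdef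
    have hYn : Measurable[F n] Y := hYm n
    have hYn0 : Measurable Y := hYn.mono (hF n) le_rfl
    have hGY' : ∀ᵐ x ∂π, -G x ≤ Y x + Z n x := by
      filter_upwards [hGY] with x hx
      rwa [Finset.sum_range_succ] at hx
    -- step 1
    have h1 : Integrable (fun x => max (-Y x) 0) π := by
      let C : ℕ → Set Ω := fun N => A n N ∩ {x | |Y x| ≤ N}
      have hYabs : ∀ N : ℕ, MeasurableSet[F n] {x | |Y x| ≤ N} := fun N => by
        have : {x | |Y x| ≤ N} = Y ⁻¹' Set.Icc (-(N : ℝ)) N := by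
          ext x; simp [abs_le]
        rw [this]; exact hYn measurableSet_Icc
      have hC : ∀ N, MeasurableSet[F n] (C N) := fun N =>
        @MeasurableSet.inter _ (F n) _ _ (hA n N) (hYabs N)
      have hneg : MeasurableSet[F n] {x | Y x < 0} := hYn measurableSet_Iio
      have hcov : AECover π atTop C := by
        refine ⟨Eventually.of_forall fun x => ?_, fun N => hF n _ (hC N)⟩
        filter_upwards [hAev n x, eventually_ge_atTop (Nat.ceil |Y x|)] with N h1 h2
        have h3 : |Y x| ≤ N := (Nat.le_ceil _).trans (by exact_mod_cast h2)
        exact ⟨h1, h3⟩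
      have hYC : ∀ N, IntegrableOn Y (C N) π := by
        intro N
        refine IntegrableOn.of_bound (measure_lt_top _ _) hYn0.aestronglyMeasurable N ?_
        exact (ae_restrict_iff' (hF n _ (hC N))).2 (Eventually.of_forall fun x hx => hx.2)
      refine hcov.integrable_of_integral_bounded_of_nonneg_ae (∫ x, |G x| ∂π)
        (fun N => (hYC N).neg.sup (integrable_zero _ _ _)) (Eventually.of_forall fun x => le_max_right _ _)
        (Eventually.of_forall fun N => ?_)
      have hD : MeasurableSet[F n] (C N ∩ {x | Y x < 0}) :=
        @MeasurableSet.inter _ (F n) _ _ (hC N) hneg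
      obtain ⟨i1, i2⟩ := hint n N (C N ∩ {x | Y x < 0}) hD (fun x hx => hx.1.1)
      have e1 : ∫ x in C N, max (-Y x) 0 ∂π = ∫ x in C N ∩ {x | Y x < 0}, -Y x ∂π := by
        rw [← setIntegral_indicator (hF n _ hneg)]
        congr 1
        funext x
        by_cases hx : Y x < 0
        · rw [Set.indicator_of_mem (show x ∈ {x | Y x < 0} from hx), max_eq_left (by linarith)]
        · rw [Set.indicator_of_notMem (show x ∉ {x | Y x < 0} from hx),
            max_eq_right (by linarith)]
      rw [e1]
      calc ∫ x in C N ∩ {x | Y x < 0}, -Y x ∂π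
          ≤ ∫ x in C N ∩ {x | Y x < 0}, (Z n x + |G x|) ∂π := by
            apply integral_mono_ae
            · exact ((hYC N).mono_set Set.inter_subset_left).neg
            · exact i1.add hG.abs.integrableOn
            · filter_upwards [ae_restrict_of_ae hGY'] with x hx
              have := le_abs_self (G x)
              linarith
        _ = ∫ x in C N ∩ {x | Y x < 0}, |G x| ∂π := by
            rw [integral_add i1 hG.abs.integrableOn, i2, zero_add]
        _ ≤ ∫ x, |G x| ∂π :=
            setIntegral_le_integral hG.abs (Eventually.of_forall fun x => abs_nonneg _)
    obtain ⟨hYi, hY0⟩ := ih _ h1 (Eventually.of_forall fun x => by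
      have := le_max_left (-Y x) 0
      show -(max (-Y x) 0) ≤ Y x
      linarith)
    -- step 2
    have hcov : AECover π atTop (A n) :=
      ⟨Eventually.of_forall fun x => hAev n x, fun N => hF n _ (hA n N)⟩
    have hH : Integrable (fun x => |G x + Y x|) π := (hG.add hYi).abs
    have hZi : Integrable (Z n) π := by
      refine hcov.integrable_of_integral_norm_bounded (∫ x, 2 * |G x + Y x| ∂π)
        (fun N => (hint n N _ (hA n N) subset_rfl).1) (Eventually.of_forall fun N => ?_)
      obtain ⟨i1, i2⟩ := hint n N _ (hA n N) subset_rfl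
      calc ∫ x in A n N, ‖Z n x‖ ∂π ≤ ∫ x in A n N, (Z n x + 2 * |G x + Y x|) ∂π := by
            apply integral_mono_ae i1.norm (i1.add (hH.const_mul 2).integrableOn)
            filter_upwards [ae_restrict_of_ae hGY'] with x hx
            show |Z n x| ≤ Z n x + 2 * |G x + Y x|
            have := le_abs_self (G x + Y x)
            have := abs_nonneg (G x + Y x)
            rcases abs_cases (Z n x) with h | h <;> linarith
        _ = ∫ x in A n N, 2 * |G x + Y x| ∂π := by
            rw [integral_add i1 (hH.const_mul 2).integrableOn, i2, zero_add]
        _ ≤ ∫ x, 2 * |G x + Y x| ∂π :=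
            setIntegral_le_integral (hH.const_mul 2)
              (Eventually.of_forall fun x => by simp)
    have hZ0 : ∫ x, Z n x ∂π = 0 := by
      have t := hcov.integral_tendsto_of_countably_generated hZi
      simp only [(hint n _ _ (hA n _) subset_rfl).2] at t
      exact (tendsto_nhds_unique t tendsto_const_nhds)
    simp only [Finset.sum_range_succ]
    refine ⟨hYi.add hZi, ?_⟩
    rw [integral_add hYi hZi]
    show ∫ x, Y x ∂π + _ = 0
    rw [hY0, hZ0, add_zero]

end MartTransform
end


section
section Weak
variable {T d : ℕ}

theorem pastSigma_le (t : ℕ) : pastSigma T d t ≤ (inferInstance : MeasurableSpace (Path T d)) := by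
  refine iSup_le fun s => iSup_le fun _ => ?_
  exact (measurable_pi_apply s).comap_le

theorem pastSigma_mono {s t : ℕ} (hst : s ≤ t) : pastSigma T d s ≤ pastSigma T d t := by
  refine iSup_le fun r => iSup_le fun hr => ?_
  exact le_iSup_of_le r (le_iSup_of_le (hr.trans hst) le_rfl)

theorem measurable_coord_past {t : ℕ} (s : Fin T) (hs : (s : ℕ) ≤ t) (i : Fin d) :
    Measurable[pastSigma T d t] (fun x : Path T d => x s i) := by
  have h : Measurable[pastSigma T d t] (fun x : Path T d => x s) := by
    rw [measurable_iff_comap_le]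
    exact le_iSup_of_le s (le_iSup_of_le hs le_rfl)
  exact (measurable_pi_apply i).comp h

/-- orthogonality of increments to bounded past-measurable functions -/
def MartOrth (π : Measure (Path T d)) : Prop :=
  ∀ (t : ℕ) (ht : t + 1 < T) (i : Fin d) (g : Path T d → ℝ), Measurable[pastSigma T d t] g →
    (∃ C, ∀ x, |g x| ≤ C) →
    ∫ x, g x * (x ⟨t + 1, ht⟩ i - x ⟨t, Nat.lt_of_succ_lt ht⟩ i) ∂π = 0

theorem ae_cube {π : Measure (Path T d)} {μ : Fin T → Fin d → Measure ℝ}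
    (hm : HasMarginals π μ) {M : ℝ} (hsupp : ∀ t i, (μ t i) (Set.Icc (-M) M)ᶜ = 0) :
    ∀ᵐ x ∂π, x ∈ cube T d M := by
  simp only [cube, Set.mem_ofPred_eq, ae_all_iff]
  intro t i
  have h := hsupp t i
  rw [← hm t i, Measure.map_apply (by fun_prop) measurableSet_Icc.compl] at h
  exact h

theorem isCompact_cube (T d : ℕ) (M : ℝ) : IsCompact (cube T d M) := by
  have : cube T d M = Set.pi Set.univ fun _ => Set.pi Set.univ fun _ => Set.Icc (-M) M := by
    ext x; simp only [cube, Set.mem_ofPred_eq, Set.mem_pi, Set.mem_univ, true_implies]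
  rw [this]
  exact isCompact_univ_pi fun _ => isCompact_univ_pi fun _ => isCompact_Icc

theorem weak_duality {π : Measure (Path T d)} [IsProbabilityMeasure π]
    {μ : Fin T → Fin d → Measure ℝ} (hm : HasMarginals π μ) {M : ℝ}
    (hcube : ∀ᵐ x ∂π, x ∈ cube T d M) (horth : MartOrth π)
    {c : Path T d → ℝ} (hc : Continuous c)
    {φ : Fin T → Fin d → ℝ → ℝ} {h : ∀ t : ℕ, t + 1 < T → Fin d → Path T d → ℝ}
    (hφ : ∀ t i, Integrable (φ t i) (μ t i))
    (hh : ∀ (t : ℕ) (ht : t + 1 < T) (i : Fin d), Measurable[pastSigma T d t] (h t ht i))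
    (hle : ∀ x ∈ cube T d M, c x ≤ hedgeFn φ h x) :
    Integrable (hedgeFn φ h) π ∧ ∫ x, hedgeFn φ h x ∂π = ∑ t, ∑ i, ∫ y, φ t i y ∂(μ t i) := by
  let Z : ℕ → Path T d → ℝ := fun t x => ∑ i, if ht : t + 1 < T then
    h t ht i x * (x ⟨t + 1, ht⟩ i - x ⟨t, Nat.lt_of_succ_lt ht⟩ i) else 0
  let S : Path T d → ℝ := fun x => ∑ t, ∑ i, φ t i (x t i)
  have hdec : ∀ x, hedgeFn φ h x = S x + ∑ t ∈ Finset.range T, Z t x := by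
    intro x
    rw [← Fin.sum_univ_eq_sum_range (fun t => Z t x)]
    rfl
  have hφ' : ∀ t i, Integrable (fun x : Path T d => φ t i (x t i)) π := by
    intro t i
    have := hφ t i
    rw [← hm t i] at this
    exact this.comp_measurable (by fun_prop)
  have hφint : ∀ t i, ∫ x, φ t i (x t i) ∂π = ∫ y, φ t i y ∂(μ t i) := by
    intro t i
    have := hφ t i
    rw [← hm t i] at this ⊢
    rw [integral_map (Measurable.aemeasurable (by fun_prop)) this.aestronglyMeasurable]
  have hSi : Integrable S π := integrable_finsetSum _ fun t _ =>
    integrable_finsetSum _ fun i _ => hφ' t i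
  have hSint : ∫ x, S x ∂π = ∑ t, ∑ i, ∫ y, φ t i y ∂(μ t i) := by
    simp only [S]
    rw [integral_finsetSum _ fun t _ => integrable_finsetSum _ fun i _ => hφ' t i]
    refine Finset.sum_congr rfl fun t _ => ?_
    rw [integral_finsetSum _ fun i _ => hφ' t i]
    exact Finset.sum_congr rfl fun i _ => hφint t i
  obtain ⟨C, hC⟩ := (isCompact_cube T d M).exists_bound_of_continuousOn hc.continuousOn
  have key := mart_transform π (fun t => pastSigma T d t) pastSigma_le
    (fun n => pastSigma_mono (Nat.le_succ n)) Z ?_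
    (fun t N => {x | ∀ i, ∀ ht : t + 1 < T, |h t ht i x| ≤ N}) ?_ ?_ ?_ T
    (fun x => C + S x) ((integrable_const C).add hSi) ?_
  · obtain ⟨k1, k2⟩ := key
    have e : hedgeFn φ h = fun x => S x + ∑ t ∈ Finset.range T, Z t x := funext hdec
    rw [e]
    exact ⟨hSi.add k1, by rw [integral_add hSi k1, k2, add_zero, hSint]⟩
  · intro n
    refine Finset.measurable_sum _ fun i _ => ?_
    by_cases ht : n + 1 < T
    · simp only [dif_pos ht]
      exact ((hh n ht i).mono (pastSigma_mono (Nat.le_succ n)) le_rfl).mul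
        ((measurable_coord_past (⟨n + 1, ht⟩ : Fin T) le_rfl i).sub
          (measurable_coord_past (⟨n, Nat.lt_of_succ_lt ht⟩ : Fin T) (Nat.le_succ n) i))
    · simp only [dif_neg ht]; exact measurable_const
  · intro n N
    simp only [Set.ofPred_forall]
    refine @MeasurableSet.iInter _ _ (pastSigma T d n) _ _ fun i => ?_
    refine @MeasurableSet.iInter _ _ (pastSigma T d n) _ _ fun ht => ?_
    have : {x | |h n ht i x| ≤ N} = h n ht i ⁻¹' Set.Icc (-(N : ℝ)) N := by
      ext x; simp [abs_le]
    rw [this]; exact hh n ht i measurableSet_Icc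
  · intro n x
    simp only [Set.mem_ofPred_eq, eventually_all]
    intro i ht
    filter_upwards [eventually_ge_atTop (Nat.ceil |h n ht i x|)] with N h2
    exact (Nat.le_ceil _).trans (by exact_mod_cast h2)
  · intro n N B hB hBA
    have hB0 : MeasurableSet B := pastSigma_le n _ hB
    by_cases ht : n + 1 < T
    · simp only [Z, dif_pos ht]
      have hi : ∀ i, IntegrableOn (fun x => h n ht i x *
          (x ⟨n + 1, ht⟩ i - x ⟨n, Nat.lt_of_succ_lt ht⟩ i)) B π := by
        intro i
        have hmeas : Measurable (h n ht i) := (hh n ht i).mono (pastSigma_le n) le_rfl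
        refine IntegrableOn.of_bound (measure_lt_top _ _)
          (Measurable.aestronglyMeasurable (by fun_prop)) (N * (2 * M)) ?_
        filter_upwards [ae_restrict_of_ae hcube, ae_restrict_mem hB0] with x hx hxB
        rw [norm_mul]
        have h1 := hx ⟨n + 1, ht⟩ i
        have h2 := hx ⟨n, Nat.lt_of_succ_lt ht⟩ i
        refine mul_le_mul (hBA hxB i ht) ?_ (norm_nonneg _) (Nat.cast_nonneg _)
        rw [Real.norm_eq_abs, abs_le]
        constructor <;> linarith [h1.1, h1.2, h2.1, h2.2]
      refine ⟨integrable_finsetSum _ fun i _ => hi i, ?_⟩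
      rw [integral_finsetSum _ fun i _ => hi i]
      refine Finset.sum_eq_zero fun i _ => ?_
      rw [← integral_indicator hB0, ← horth n ht i (B.indicator (h n ht i))
        ((hh n ht i).indicator hB) ⟨N, fun x => ?_⟩]
      · congr 1
        funext x
        by_cases hx : x ∈ B <;> simp [hx]
      · by_cases hx : x ∈ B
        · rw [Set.indicator_of_mem hx]; exact hBA hx i ht
        · rw [Set.indicator_of_notMem hx]; simp
    · simp [Z, dif_neg ht]
  · filter_upwards [hcube] with x hx
    have h1 := hle x hx
    rw [hdec] at h1
    have h2 := hC x hx
    rw [Real.norm_eq_abs, abs_le] at h2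
    linarith [h2.1]

theorem martOrth_of_mart {π : Measure (Path T d)} [IsProbabilityMeasure π] {M : ℝ}
    (hcube : ∀ᵐ x ∂π, x ∈ cube T d M) (hmart : IsMartingaleMeasure π) : MartOrth π := by
  intro t ht i g hg hgb
  obtain ⟨C, hC⟩ := hgb
  have hcoord : ∀ s : Fin T, Integrable (fun x : Path T d => x s i) π := by
    intro s
    refine Integrable.of_bound (Measurable.aestronglyMeasurable (by fun_prop)) M ?_
    filter_upwards [hcube] with x hx
    rw [Real.norm_eq_abs, abs_le]; exact hx s i
  have hgm : Measurable g := hg.mono (pastSigma_le t) le_rfl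
  have hgi : ∀ s : Fin T, Integrable (fun x : Path T d => g x * x s i) π := fun s =>
    (hcoord s).bdd_mul hgm.aestronglyMeasurable (Eventually.of_forall hC)
  have h1 : ∫ x, g x * x ⟨t + 1, ht⟩ i ∂π = ∫ x, g x * x ⟨t, Nat.lt_of_succ_lt ht⟩ i ∂π := by
    have e1 : π[fun x => g x * x ⟨t + 1, ht⟩ i | pastSigma T d t]
        =ᵐ[π] fun x => g x * x ⟨t, Nat.lt_of_succ_lt ht⟩ i := by
      have := condExp_mul_of_stronglyMeasurable_left (μ := π) (m := pastSigma T d t)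
        (hg.stronglyMeasurable) (hgi ⟨t + 1, ht⟩) (hcoord ⟨t + 1, ht⟩)
      refine this.trans ?_
      filter_upwards [hmart t ht i] with x hx
      have hx' : (π[fun x => x ⟨t + 1, ht⟩ i | pastSigma T d t]) x = _ := hx
      simp only [Pi.mul_apply, hx']
    rw [← integral_condExp (pastSigma_le t)]
    exact integral_congr_ae e1
  simp only [mul_sub]
  rw [integral_sub (hgi _) (hgi _), h1, sub_self]

end Weak
end


section
section Hedges
variable {T d : ℕ} {ψ : ℝ → ℝ} {l : ℕ}

theorem nnHedge_zero (ψ : ℝ → ℝ) (l m : ℕ) {T d : ℕ} :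
    NNHedge ψ l m (T := T) (d := d) (fun _ _ _ => 0) (fun _ _ _ _ => 0) :=
  ⟨fun _ _ => ⟨_, isNN_const ψ l 1 m 0, fun _ => rfl⟩,
    fun _ _ _ => ⟨_, isNN_const ψ l _ m 0, fun _ => rfl⟩⟩

theorem nnHedge_add {m m' : ℕ} {φ φ' : Fin T → Fin d → ℝ → ℝ}
    {h h' : ∀ t : ℕ, t + 1 < T → Fin d → Path T d → ℝ} (H : NNHedge ψ l m φ h)
    (H' : NNHedge ψ l m' φ' h') :
    NNHedge ψ l (m + m') (fun t i y => φ t i y + φ' t i y)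
      (fun t ht i x => h t ht i x + h' t ht i x) := by
  refine ⟨fun t i => ?_, fun t ht i => ?_⟩
  · obtain ⟨F, hF, e⟩ := H.1 t i
    obtain ⟨F', hF', e'⟩ := H'.1 t i
    exact ⟨_, isNN_add hF hF', fun y => by simp only [e, e']⟩
  · obtain ⟨F, hF, e⟩ := H.2 t ht i
    obtain ⟨F', hF', e'⟩ := H'.2 t ht i
    exact ⟨_, isNN_add hF hF', fun y => by simp only [e, e']⟩

theorem nnHedge_smul {m : ℕ} {φ : Fin T → Fin d → ℝ → ℝ}
    {h : ∀ t : ℕ, t + 1 < T → Fin d → Path T d → ℝ} (H : NNHedge ψ l m φ h) (a : ℝ) :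
    NNHedge ψ l m (fun t i y => a * φ t i y) (fun t ht i x => a * h t ht i x) := by
  refine ⟨fun t i => ?_, fun t ht i => ?_⟩
  · obtain ⟨F, hF, e⟩ := H.1 t i
    exact ⟨_, isNN_smul hF a, fun y => by simp only [e]⟩
  · obtain ⟨F, hF, e⟩ := H.2 t ht i
    exact ⟨_, isNN_smul hF a, fun y => by simp only [e]⟩

theorem nnHedge_mono {m m' : ℕ} (hm : m ≤ m') {φ : Fin T → Fin d → ℝ → ℝ}
    {h : ∀ t : ℕ, t + 1 < T → Fin d → Path T d → ℝ} (H : NNHedge ψ l m φ h) :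
    NNHedge ψ l m' φ h := by
  refine ⟨fun t i => ?_, fun t ht i => ?_⟩
  · obtain ⟨F, hF, e⟩ := H.1 t i
    exact ⟨_, isNN_mono hm hF, e⟩
  · obtain ⟨F, hF, e⟩ := H.2 t ht i
    exact ⟨_, isNN_mono hm hF, e⟩

theorem hedgeFn_zero (x : Path T d) :
    hedgeFn (fun _ _ _ => 0) (fun _ _ _ _ => 0) x = 0 := by
  simp [hedgeFn]

theorem hedgeFn_add (φ φ' : Fin T → Fin d → ℝ → ℝ)
    (h h' : ∀ t : ℕ, t + 1 < T → Fin d → Path T d → ℝ) (x : Path T d) :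
    hedgeFn (fun t i y => φ t i y + φ' t i y) (fun t ht i x => h t ht i x + h' t ht i x) x
      = hedgeFn φ h x + hedgeFn φ' h' x := by
  have : ∀ (t : Fin T) (i : Fin d), (if ht : (t : ℕ) + 1 < T then
        (h t ht i x + h' t ht i x) * (x ⟨(t : ℕ) + 1, ht⟩ i - x t i) else 0)
      = (if ht : (t : ℕ) + 1 < T then h t ht i x * (x ⟨(t : ℕ) + 1, ht⟩ i - x t i) else 0)
      + (if ht : (t : ℕ) + 1 < T then h' t ht i x * (x ⟨(t : ℕ) + 1, ht⟩ i - x t i) else 0) := by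
    intro t i
    split_ifs <;> ring
  simp only [hedgeFn, this, Finset.sum_add_distrib]
  ring

theorem hedgeFn_smul (φ : Fin T → Fin d → ℝ → ℝ)
    (h : ∀ t : ℕ, t + 1 < T → Fin d → Path T d → ℝ) (a : ℝ) (x : Path T d) :
    hedgeFn (fun t i y => a * φ t i y) (fun t ht i x => a * h t ht i x) x
      = a * hedgeFn φ h x := by
  have : ∀ (t : Fin T) (i : Fin d), (if ht : (t : ℕ) + 1 < T then
        (a * h t ht i x) * (x ⟨(t : ℕ) + 1, ht⟩ i - x t i) else 0)
      = a * (if ht : (t : ℕ) + 1 < T then h t ht i x * (x ⟨(t : ℕ) + 1, ht⟩ i - x t i) else 0) := by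
    intro t i
    split_ifs <;> ring
  simp only [hedgeFn, this, ← Finset.mul_sum]
  ring

theorem continuous_restrFlatten (t : ℕ) (ht : t + 1 < T) :
    Continuous (restrFlatten T d t ht) := by
  unfold restrFlatten
  fun_prop

theorem nnHedge_static {m : ℕ} {F : (Fin 1 → ℝ) → ℝ} (hF : IsNeuralNet ψ l 1 m F)
    (t : Fin T) (i : Fin d) : ∃ φ h, NNHedge ψ l m (T := T) (d := d) φ h ∧
      ∀ x, hedgeFn φ h x = F fun _ => x t i := by
  refine ⟨fun t' i' y => if t' = t ∧ i' = i then F fun _ => y else 0, fun _ _ _ _ => 0,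
    ⟨fun t' i' => ?_, (nnHedge_zero ψ l m).2⟩, fun x => ?_⟩
  · by_cases hh : t' = t ∧ i' = i
    · simp only [if_pos hh]; exact ⟨F, hF, fun _ => rfl⟩
    · simp only [if_neg hh]; exact ⟨_, isNN_const ψ l 1 m 0, fun _ => rfl⟩
  · simp only [hedgeFn, zero_mul, dite_eq_ite, ite_self, Finset.sum_const_zero, add_zero]
    rw [Finset.sum_eq_single t, Finset.sum_eq_single i]
    · simp
    · intro b _ hb; simp [hb]
    · simp
    · intro b _ hb; simp [hb]
    · simp

theorem nnHedge_dynamic {m : ℕ} (t : ℕ) (ht : t + 1 < T) {F : (Fin ((t + 1) * d) → ℝ) → ℝ}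
    (hF : IsNeuralNet ψ l ((t + 1) * d) m F)
    (i : Fin d) : ∃ φ h, NNHedge ψ l m (T := T) (d := d) φ h ∧
      ∀ x, hedgeFn φ h x = F (restrFlatten T d t ht x) *
        (x ⟨t + 1, ht⟩ i - x ⟨t, Nat.lt_of_succ_lt ht⟩ i) := by
  refine ⟨fun _ _ _ => 0, fun t' _ i' x => if t' = t ∧ i' = i then F (restrFlatten T d t ht x)
    else 0, ⟨(nnHedge_zero ψ l m (T := T) (d := d)).1, fun t' ht' i' => ?_⟩, fun x => ?_⟩
  · by_cases hh : t' = t ∧ i' = i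
    · obtain ⟨rfl, rfl⟩ := hh
      simp only [and_self, if_true]; exact ⟨F, hF, fun _ => rfl⟩
    · simp only [if_neg hh]; exact ⟨_, isNN_const ψ l _ m 0, fun _ => rfl⟩
  · simp only [hedgeFn, Finset.sum_const_zero, zero_add]
    rw [Finset.sum_eq_single (⟨t, Nat.lt_of_succ_lt ht⟩ : Fin T), Finset.sum_eq_single i]
    · simp [ht]
    · intro b _ hb; simp [hb]
    · simp
    · intro b _ hb
      have hb' : (b : ℕ) ≠ t := fun h => hb (Fin.ext h)
      simp [hb']
    · simp

theorem nnHedge_continuous (hψ : Continuous ψ) {m : ℕ} {φ : Fin T → Fin d → ℝ → ℝ}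
    {h : ∀ t : ℕ, t + 1 < T → Fin d → Path T d → ℝ} (H : NNHedge ψ l m φ h) :
    (∀ t i, Continuous (φ t i)) ∧ ∀ t ht i, Continuous (h t ht i) := by
  refine ⟨fun t i => ?_, fun t ht i => ?_⟩
  · obtain ⟨F, hF, e⟩ := H.1 t i
    rw [show φ t i = fun y => F fun _ => y from funext e]
    have := isNN_continuous hψ hF
    fun_prop
  · obtain ⟨F, hF, e⟩ := H.2 t ht i
    rw [show h t ht i = fun x => F (restrFlatten T d t ht x) from funext e]
    exact (isNN_continuous hψ hF).comp (continuous_restrFlatten t ht)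

theorem continuous_hedgeFn {φ : Fin T → Fin d → ℝ → ℝ}
    {h : ∀ t : ℕ, t + 1 < T → Fin d → Path T d → ℝ}
    (h1 : ∀ t i, Continuous (φ t i)) (h2 : ∀ t ht i, Continuous (h t ht i)) :
    Continuous (hedgeFn φ h) := by
  unfold hedgeFn
  refine Continuous.add (by fun_prop) ?_
  refine continuous_finsetSum _ fun t _ => continuous_finsetSum _ fun i _ => ?_
  by_cases ht : (t : ℕ) + 1 < T
  · simp only [dif_pos ht]
    have := h2 t ht i
    fun_prop
  · simp only [dif_neg ht]; exact continuous_const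

theorem measurable_restrFlatten (t : ℕ) (ht : t + 1 < T) :
    Measurable[pastSigma T d t] (restrFlatten T d t ht) := by
  refine @measurable_pi_lambda _ _ _ (pastSigma T d t) _ _ fun j => ?_
  refine measurable_coord_past _ ?_ _
  have := (finProdFinEquiv.symm j).1.2
  simp only [Fin.val_castLE]
  omega

theorem pastSigma_le_comap (t : ℕ) (ht : t + 1 < T) :
    pastSigma T d t ≤ MeasurableSpace.comap (restrFlatten T d t ht) inferInstance := by
  refine iSup_le fun s => iSup_le fun hs => ?_
  rw [← measurable_iff_comap_le]
  have e : (fun x : Path T d => x s) = (fun (v : Fin ((t + 1) * d) → ℝ) (i : Fin d) =>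
      v (finProdFinEquiv (⟨s, by omega⟩, i))) ∘ restrFlatten T d t ht := by
    funext x i
    simp only [Function.comp, restrFlatten, Equiv.symm_apply_apply]
    rfl
  rw [e]
  exact Measurable.comp (by fun_prop) (comap_measurable _)

theorem nnHedge_measurable (hψ : Continuous ψ) {m : ℕ} {φ : Fin T → Fin d → ℝ → ℝ}
    {h : ∀ t : ℕ, t + 1 < T → Fin d → Path T d → ℝ} (H : NNHedge ψ l m φ h)
    (t : ℕ) (ht : t + 1 < T) (i : Fin d) : Measurable[pastSigma T d t] (h t ht i) := by
  obtain ⟨F, hF, e⟩ := H.2 t ht i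
  rw [show h t ht i = fun x => F (restrFlatten T d t ht x) from funext e]
  exact (isNN_continuous hψ hF).measurable.comp (measurable_restrFlatten t ht)

theorem integrable_of_cube {π : Measure (Path T d)} [IsFiniteMeasure π] {M : ℝ}
    (hcube : ∀ᵐ x ∂π, x ∈ cube T d M) {f : Path T d → ℝ} (hf : Continuous f) :
    Integrable f π := by
  obtain ⟨C, hC⟩ := (isCompact_cube T d M).exists_bound_of_continuousOn hf.continuousOn
  refine Integrable.of_bound hf.measurable.aestronglyMeasurable C ?_
  filter_upwards [hcube] with x hx using hC x hx

theorem integral_eq_of_approx {π π' : Measure (Path T d)} [IsProbabilityMeasure π]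
    [IsProbabilityMeasure π'] {M : ℝ}
    (hcube : ∀ᵐ x ∂π, x ∈ cube T d M) (hcube' : ∀ᵐ x ∂π', x ∈ cube T d M)
    {f : Path T d → ℝ} (hf : Continuous f)
    (happ : ∀ ε > 0, ∃ F, Continuous F ∧ (∀ x ∈ cube T d M, |F x - f x| ≤ ε) ∧
      ∫ x, F x ∂π = ∫ x, F x ∂π') : ∫ x, f x ∂π = ∫ x, f x ∂π' := by
  have key : ∀ ε > 0, |∫ x, f x ∂π - ∫ x, f x ∂π'| ≤ ε := by
    intro ε hε
    obtain ⟨F, hF, h1, h2⟩ := happ (ε / 2) (by positivity)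
    have aux : ∀ (ρ : Measure (Path T d)) [IsProbabilityMeasure ρ],
        (∀ᵐ x ∂ρ, x ∈ cube T d M) → |∫ x, F x ∂ρ - ∫ x, f x ∂ρ| ≤ ε / 2 := by
      intro ρ _ hρ
      rw [← integral_sub (integrable_of_cube hρ hF) (integrable_of_cube hρ hf)]
      have := norm_integral_le_of_norm_le_const (μ := ρ) (f := fun x => F x - f x) (C := ε / 2)
        (by filter_upwards [hρ] with x hx using h1 x hx)
      simpa using this
    have a1 := aux π hcube
    have a2 := aux π' hcube'
    rw [abs_le] at *
    constructor <;> linarith [a1.1, a1.2, a2.1, a2.2]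
  have := le_of_forall_pos_le_add (b := (0 : ℝ)) (fun ε hε => by simpa using key ε hε)
  have h0 := abs_nonpos_iff.1 this
  linarith

end Hedges

section Ident
variable {T d : ℕ} {ψ : ℝ → ℝ} {l : ℕ}

theorem ident_marginals (hψcont : Continuous ψ) (hψmono : Monotone ψ)
    (hψbdd : ∃ C, ∀ x, |ψ x| ≤ C) (hψnonconst : ∃ x y, ψ x ≠ ψ y) (hl : 1 ≤ l)
    {π μ0 : Measure (Path T d)} [IsProbabilityMeasure π] [IsProbabilityMeasure μ0] {M : ℝ}
    (hcube : ∀ᵐ x ∂π, x ∈ cube T d M) (hcube' : ∀ᵐ x ∂μ0, x ∈ cube T d M)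
    (hV : ∀ m φ h, NNHedge ψ l m φ h → ∫ x, hedgeFn φ h x ∂π = ∫ x, hedgeFn φ h x ∂μ0)
    {μ : Fin T → Fin d → Measure ℝ} (hm : HasMarginals μ0 μ) : HasMarginals π μ := by
  intro t i
  have hmeas : Measurable (fun x : Path T d => x t i) := by fun_prop
  rw [← hm t i]
  have := Measure.isProbabilityMeasure_map (μ := π) hmeas.aemeasurable
  have := Measure.isProbabilityMeasure_map (μ := μ0) hmeas.aemeasurable
  refine ext_of_forall_integral_eq_of_IsFiniteMeasure fun f => ?_
  rw [integral_map hmeas.aemeasurable f.continuous.measurable.aestronglyMeasurable,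
    integral_map hmeas.aemeasurable f.continuous.measurable.aestronglyMeasurable]
  refine integral_eq_of_approx hcube hcube' (by fun_prop) fun ε hε => ?_
  obtain ⟨m, F, hF, h⟩ := appr_all hψcont hψmono hψbdd hψnonconst hl
    (K := Set.pi Set.univ fun _ : Fin 1 => Set.Icc (-M) M)
    (isCompact_univ_pi fun _ => isCompact_Icc)
    (f := fun y => f (y 0)) (by fun_prop) ε hε
  obtain ⟨φ, hh, hN, e⟩ := nnHedge_static hF t i
  obtain ⟨c1, c2⟩ := nnHedge_continuous hψcont hN
  refine ⟨hedgeFn φ hh, continuous_hedgeFn c1 c2, fun x hx => ?_, hV _ _ _ hN⟩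
  rw [e]
  exact h (fun _ => x t i) (fun _ _ => hx t i)

theorem ident_orth (hψcont : Continuous ψ) (hψmono : Monotone ψ)
    (hψbdd : ∃ C, ∀ x, |ψ x| ≤ C) (hψnonconst : ∃ x y, ψ x ≠ ψ y) (hl : 1 ≤ l)
    {π μ0 : Measure (Path T d)} [IsProbabilityMeasure π] [IsProbabilityMeasure μ0] {M : ℝ}
    (hM : 0 < M)
    (hcube : ∀ᵐ x ∂π, x ∈ cube T d M) (hcube' : ∀ᵐ x ∂μ0, x ∈ cube T d M)
    (hV : ∀ m φ h, NNHedge ψ l m φ h → ∫ x, hedgeFn φ h x ∂π = ∫ x, hedgeFn φ h x ∂μ0)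
    (horth : MartOrth μ0) : MartOrth π := by
  intro t ht i g hg hgb
  set s1 : Fin T := ⟨t + 1, ht⟩
  set s0 : Fin T := ⟨t, Nat.lt_of_succ_lt ht⟩
  set r := restrFlatten T d t ht
  have hrc : Continuous r := continuous_restrFlatten t ht
  have hrm : Measurable r := hrc.measurable
  -- continuous bounded test functions
  have hcont : ∀ f : BoundedContinuousFunction (Fin ((t + 1) * d) → ℝ) ℝ,
      ∫ x, f (r x) * (x s1 i - x s0 i) ∂π = 0 := by
    intro f
    have h0 : ∫ x, f (r x) * (x s1 i - x s0 i) ∂μ0 = 0 :=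
      horth t ht i (fun x => f (r x)) (f.continuous.measurable.comp (measurable_restrFlatten t ht))
        ⟨‖f‖, fun x => f.norm_coe_le_norm _⟩
    rw [← h0]
    refine integral_eq_of_approx hcube hcube' (by fun_prop) fun ε hε => ?_
    obtain ⟨m, F, hF, h⟩ := appr_all hψcont hψmono hψbdd hψnonconst hl
      (K := Set.pi Set.univ fun _ : Fin ((t + 1) * d) => Set.Icc (-M) M)
      (isCompact_univ_pi fun _ => isCompact_Icc)
      (f := f) f.continuous (ε / (2 * M)) (by positivity)
    obtain ⟨φ, hh, hN, e⟩ := nnHedge_dynamic t ht hF i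
    obtain ⟨c1, c2⟩ := nnHedge_continuous hψcont hN
    refine ⟨hedgeFn φ hh, continuous_hedgeFn c1 c2, fun x hx => ?_, hV _ _ _ hN⟩
    rw [e, ← sub_mul, abs_mul]
    have a1 := h (r x) (fun j _ => hx _ _)
    have a2 : |x s1 i - x s0 i| ≤ 2 * M := by
      have h1 := hx s1 i
      have h2 := hx s0 i
      rw [abs_le]; constructor <;> linarith [h1.1, h1.2, h2.1, h2.2]
    calc _ ≤ ε / (2 * M) * (2 * M) := mul_le_mul a1 a2 (abs_nonneg _) (by positivity)
      _ = ε := by field_simp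
  have hcoord : ∀ s : Fin T, Integrable (fun x : Path T d => x s i + M) π := fun s =>
    integrable_of_cube hcube (by fun_prop)
  have hbm : ∀ (g : Path T d → ℝ), Measurable g → (∃ C, ∀ x, |g x| ≤ C) → ∀ s : Fin T,
      Integrable (fun x : Path T d => g x * (x s i + M)) π := by
    rintro g hg ⟨C, hC⟩ s
    exact (hcoord s).bdd_mul hg.aestronglyMeasurable (Eventually.of_forall hC)
  have hsplit : ∀ (g : Path T d → ℝ), Measurable g → (∃ C, ∀ x, |g x| ≤ C) →
      ∫ x, g x * (x s1 i - x s0 i) ∂π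
        = ∫ x, g x * (x s1 i + M) ∂π - ∫ x, g x * (x s0 i + M) ∂π := by
    intro g h1 h2
    rw [← integral_sub (hbm g h1 h2 s1) (hbm g h1 h2 s0)]
    congr 1; funext x; ring
  let ν : Fin T → Measure (Fin ((t + 1) * d) → ℝ) := fun s =>
    (π.withDensity fun x => ENNReal.ofReal (x s i + M)).map r
  have hν : ∀ s, ∀ f : (Fin ((t + 1) * d) → ℝ) → ℝ, Measurable f →
      ∫ y, f y ∂(ν s) = ∫ x, f (r x) * (x s i + M) ∂π := by
    intro s f hf
    simp only [ν]
    rw [integral_map hrm.aemeasurable hf.aestronglyMeasurable,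
      integral_withDensity_eq_integral_toReal_smul (by fun_prop)
        (Eventually.of_forall fun _ => ENNReal.ofReal_lt_top)]
    refine integral_congr_ae ?_
    filter_upwards [hcube] with x hx
    have := (hx s i).1
    simp only [smul_eq_mul]
    rw [ENNReal.toReal_ofReal (by linarith), mul_comm]
  have hfin : ∀ s, IsFiniteMeasure (ν s) := by
    intro s
    have := isFiniteMeasure_withDensity_ofReal (hcoord s).2
    exact Measure.isFiniteMeasure_map _ _
  have heq : ν s1 = ν s0 := by
    have := hfin s1
    have := hfin s0
    refine ext_of_forall_integral_eq_of_IsFiniteMeasure fun f => ?_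
    rw [hν _ _ f.continuous.measurable, hν _ _ f.continuous.measurable]
    have := hsplit (fun x => f (r x)) (f.continuous.measurable.comp hrm)
      ⟨‖f‖, fun x => f.norm_coe_le_norm _⟩
    rw [hcont f] at this
    linarith
  obtain ⟨g', hg', rfl⟩ := (hg.mono (pastSigma_le_comap t ht) le_rfl).exists_eq_measurable_comp
  have := hsplit _ (hg'.comp hrm) hgb
  rw [this]
  have e1 := hν s1 g' hg'
  have e0 := hν s0 g' hg'
  simp only [Function.comp]
  rw [← e1, ← e0, heq, sub_self]

end Ident
end


section
theorem degenerate_eq {T d : ℕ} (hdeg : IsEmpty (Fin T) ∨ IsEmpty (Fin d))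
    (μ : Fin T → Fin d → Measure ℝ) (M : ℝ) (c : Path T d → ℝ) (ψ : ℝ → ℝ) (l m : ℕ)
    (μ0 : Measure (Path T d)) :
    dualCubeNNVals ψ l m μ0 c M = dualCubeVals μ μ0 c M := by
  have hz : ∀ (φ : Fin T → Fin d → ℝ → ℝ) (h : ∀ t : ℕ, t + 1 < T → Fin d → Path T d → ℝ)
      (x : Path T d), hedgeFn φ h x = 0 := by
    intro φ h x
    rcases hdeg with hd | hd <;> simp [hedgeFn]
  ext r
  constructor
  · rintro ⟨φ, h, -, h2, h3⟩
    refine ⟨fun _ _ _ => 0, fun _ _ _ _ => 0, fun _ _ => integrable_zero _ _ _,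
      fun _ _ _ => @measurable_const _ _ _ (pastSigma T d _) _, ?_, ?_⟩
    · simpa only [hz] using h2
    · simpa only [hz] using h3
  · rintro ⟨φ, h, -, -, h2, h3⟩
    refine ⟨fun _ _ _ => 0, fun _ _ _ _ => 0, nnHedge_zero ψ l m, ?_, ?_⟩
    · simpa only [hz] using h2
    · simpa only [hz] using h3

theorem exists_primal {T d : ℕ} (t0 : Fin T) (i0 : Fin d) (M : ℝ)
    (c : Path T d → ℝ) (hc : Continuous c)
    (ψ : ℝ → ℝ) (hψcont : Continuous ψ) (l : ℕ)
    (μ0 : Measure (Path T d)) [IsProbabilityMeasure μ0] (hcube : ∀ᵐ x ∂μ0, x ∈ cube T d M) :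
    ∃ π : Measure (Path T d), IsProbabilityMeasure π ∧ (∀ᵐ x ∂π, x ∈ cube T d M) ∧
      (∀ m φ h, NNHedge ψ l m φ h → ∫ x, hedgeFn φ h x ∂π = ∫ x, hedgeFn φ h x ∂μ0) ∧
      ∀ ε > 0, ∃ m φ h, NNHedge ψ l m φ h ∧ (∀ x ∈ cube T d M, c x ≤ hedgeFn φ h x) ∧
        ∫ x, hedgeFn φ h x ∂μ0 ≤ ∫ x, c x ∂π + ε := by
  haveI : CompactSpace (cube T d M) := isCompact_iff_compactSpace.mp (isCompact_cube T d M)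
  have hms : MeasurableSet (cube T d M) := (isCompact_cube T d M).measurableSet
  have hme : MeasurableEmbedding (Subtype.val : cube T d M → Path T d) :=
    MeasurableEmbedding.subtype_coe hms
  let ν : Measure (cube T d M) := μ0.comap Subtype.val
  have hνmap : ν.map Subtype.val = μ0 := by
    rw [map_comap_subtype_coe hms]
    exact Measure.restrict_eq_self_of_ae_mem hcube
  haveI : IsProbabilityMeasure ν := by
    constructor
    have h1 : (ν.map Subtype.val) Set.univ = 1 := by rw [hνmap]; exact measure_univ
    rwa [Measure.map_apply measurable_subtype_coe MeasurableSet.univ, Set.preimage_univ] at h1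
  let V : Submodule ℝ C(cube T d M, ℝ) :=
    { carrier := {v | ∃ m φ h, NNHedge ψ l m φ h ∧ ∀ x : cube T d M, v x = hedgeFn φ h (x : Path T d)}
      zero_mem' := ⟨0, _, _, nnHedge_zero ψ l 0, fun x => (hedgeFn_zero _).symm⟩
      add_mem' := by
        rintro v w ⟨m, φ, h, H, e⟩ ⟨m', φ', h', H', e'⟩
        refine ⟨_, _, _, nnHedge_add H H', fun x => ?_⟩
        rw [hedgeFn_add, ContinuousMap.add_apply, e, e']
      smul_mem' := by
        rintro a v ⟨m, φ, h, H, e⟩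
        refine ⟨_, _, _, nnHedge_smul H a, fun x => ?_⟩
        rw [hedgeFn_smul, ContinuousMap.smul_apply, e, smul_eq_mul] }
  have h1 : (1 : C(cube T d M, ℝ)) ∈ V := by
    obtain ⟨φ, h, H, e⟩ := nnHedge_static (isNN_const ψ l 1 0 1) t0 i0
    exact ⟨0, φ, h, H, fun x => by simp [e]⟩
  let cK : C(cube T d M, ℝ) := ⟨fun x => c x, hc.comp continuous_subtype_val⟩
  obtain ⟨π, hπ, hπV, hπε⟩ := abstract_duality V h1 ν cK
  have hint : ∀ f : Path T d → ℝ, ∫ x, f x ∂(π.map Subtype.val) = ∫ x : cube T d M, f x ∂π :=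
    fun f => hme.integral_map f
  have hint0 : ∀ f : Path T d → ℝ, ∫ x, f x ∂μ0 = ∫ x : cube T d M, f x ∂ν := by
    intro f
    rw [← hme.integral_map f, hνmap]
  refine ⟨π.map Subtype.val, Measure.isProbabilityMeasure_map hme.measurable.aemeasurable, ?_,
    ?_, ?_⟩
  · rw [hme.ae_map_iff]
    exact Eventually.of_forall fun x => x.2
  · intro m φ h H
    have hcont := continuous_hedgeFn (nnHedge_continuous hψcont H).1 (nnHedge_continuous hψcont H).2
    rw [hint, hint0]
    exact hπV ⟨fun x => hedgeFn φ h x, hcont.comp continuous_subtype_val⟩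
      ⟨m, φ, h, H, fun x => rfl⟩
  · intro ε hε
    obtain ⟨v, ⟨m, φ, h, H, e⟩, hle, hv⟩ := hπε ε hε
    refine ⟨m, φ, h, H, fun x hx => ?_, ?_⟩
    · have := hle ⟨x, hx⟩
      rwa [e] at this
    · rw [hint, hint0]
      simp only [e] at hv
      exact hv

theorem nnVals_subset {T d : ℕ} (μ : Fin T → Fin d → Measure ℝ)
    (hprob : ∀ t i, IsProbabilityMeasure (μ t i)) (M : ℝ)
    (hsupp : ∀ t i, (μ t i) (Set.Icc (-M) M)ᶜ = 0)
    (c : Path T d → ℝ) (ψ : ℝ → ℝ) (hψcont : Continuous ψ) (l m : ℕ)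
    (μ0 : Measure (Path T d)) :
    dualCubeNNVals ψ l m μ0 c M ⊆ dualCubeVals μ μ0 c M := by
  rintro r ⟨φ, h, H, h2, h3⟩
  refine ⟨φ, h, fun t i => ?_, nnHedge_measurable hψcont H, h2, h3⟩
  have hf := (nnHedge_continuous hψcont H).1 t i
  obtain ⟨C, hC⟩ := (isCompact_Icc (a := -M) (b := M)).exists_bound_of_continuousOn hf.continuousOn
  haveI := hprob t i
  refine Integrable.of_bound hf.measurable.aestronglyMeasurable C ?_
  have : ∀ᵐ x ∂(μ t i), x ∈ Set.Icc (-M) M := hsupp t i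
  filter_upwards [this] with x hx using hC x hx

end

theorem nn_dual_convergence {T d : ℕ} (μ : Fin T → Fin d → Measure ℝ)
    (hprob : ∀ t i, IsProbabilityMeasure (μ t i))
    (M : ℝ) (hM : 0 < M)
    (hsupp : ∀ t i, (μ t i) (Set.Icc (-M) M)ᶜ = 0)
    (c : Path T d → ℝ) (hc : Continuous c)
    (ψ : ℝ → ℝ) (hψcont : Continuous ψ) (hψmono : Monotone ψ)
    (hψbdd : ∃ C, ∀ x, |ψ x| ≤ C) (hψnonconst : ∃ x y, ψ x ≠ ψ y)
    (l : ℕ) (hl : 1 ≤ l)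
    (μ0 : Measure (Path T d)) (hμ0 : μ0 ∈ MartSet μ) :
    Tendsto (fun m => sInf (dualCubeNNVals ψ l m μ0 c M)) atTop
      (nhds (sInf (dualCubeVals μ μ0 c M))) := by
  by_cases hdeg : IsEmpty (Fin T) ∨ IsEmpty (Fin d)
  · simp only [degenerate_eq hdeg μ M c ψ l _ μ0]
    exact tendsto_const_nhds
  simp only [not_or, not_isEmpty_iff] at hdeg
  obtain ⟨⟨t0⟩, ⟨i0⟩⟩ := hdeg
  obtain ⟨hp0, hm0, hmart0⟩ := hμ0
  have hcube0 := ae_cube hm0 hsupp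
  have horth0 := martOrth_of_mart hcube0 hmart0
  obtain ⟨π, hπ, hcube, hV, hε⟩ := exists_primal t0 i0 M c hc ψ hψcont l μ0 hcube0
  have hm := ident_marginals hψcont hψmono hψbdd hψnonconst hl hcube hcube0 hV hm0
  have horth := ident_orth hψcont hψmono hψbdd hψnonconst hl hM hcube hcube0 hV horth0
  have hlow : ∀ r ∈ dualCubeVals μ μ0 c M, ∫ x, c x ∂π ≤ r := by
    rintro r ⟨φ, h, hφ, hh, hle, rfl⟩
    have w0 := weak_duality hm0 hcube0 horth0 hc hφ hh hle
    have w := weak_duality hm hcube horth hc hφ hh hle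
    rw [w0.2, ← w.2]
    refine integral_mono_ae (integrable_of_cube hcube hc) w.1 ?_
    filter_upwards [hcube] with x hx using hle x hx
  have hsub := fun m => nnVals_subset μ hprob M hsupp c ψ hψcont l m μ0
  have hbdd : BddBelow (dualCubeVals μ μ0 c M) := ⟨_, hlow⟩
  rw [Metric.tendsto_atTop]
  intro ε hε0
  obtain ⟨m0, φ, h, H, hle, hv⟩ := hε (ε / 2) (half_pos hε0)
  refine ⟨m0, fun m hmm => ?_⟩
  have hmem : ∫ x, hedgeFn φ h x ∂μ0 ∈ dualCubeNNVals ψ l m μ0 c M :=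
    ⟨φ, h, nnHedge_mono hmm H, hle, rfl⟩
  have a1 : sInf (dualCubeNNVals ψ l m μ0 c M) ≤ ∫ x, hedgeFn φ h x ∂μ0 :=
    csInf_le (hbdd.mono (hsub m)) hmem
  have a2 : sInf (dualCubeVals μ μ0 c M) ≤ sInf (dualCubeNNVals ψ l m μ0 c M) :=
    csInf_le_csInf hbdd ⟨_, hmem⟩ (hsub m)
  have a3 : ∫ x, c x ∂π ≤ sInf (dualCubeVals μ μ0 c M) :=
    le_csInf ⟨_, hsub m hmem⟩ hlow
  rw [Real.dist_eq, abs_lt]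
  constructor <;> linarith

end MMOT
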